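/- Dirichlet energy of a harmonic function on the disk is controlled by the tangential energy of its boundary value: let q ≥ 1 be an integer and let ζ : ℝ² → ℝ^q be continuously differentiable on a neighborhood of the closed unit disk and harmonic on the open unit disk D (each component is twice continuously differentiable on D with vanishing Laplacian). Then ∫_D ‖Dζ(x)‖² dx ≤ ∫_0^{2π} ‖(d/dθ) ζ(cos θ, sin θ)‖² dθ. -/

import Mathlib

open MeasureTheory Metric
open scoped MeasureTheory

theorem differentiableOn_ball_integral_circleMap_mul {g : ℂ → ℂ}
    (hg : DifferentiableOn ℂ g (ball 0 1)) {c : ℝ → ℂ} (hc : Continuous c) :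
    DifferentiableOn ℂ (fun z => ∫ t in (0 : ℝ)..(2 * Real.pi), g (z * circleMap 0 1 t) * c t)
      (ball 0 1) := by
  intro z₀ hz₀
  rw [mem_ball_zero_iff] at hz₀
  set ρ := (1 + ‖z₀‖) / 2 with hρ
  have hzρ : ‖z₀‖ < ρ := by linarith
  have hρ1 : ρ < 1 := by linarith
  have hmem : ∀ z ∈ ball (0 : ℂ) ρ, ∀ t : ℝ, z * circleMap 0 1 t ∈ ball (0 : ℂ) ρ := by
    intro z hz t
    simpa [circleMap] using hz
  have hsub : ball (0 : ℂ) ρ ⊆ ball 0 1 := ball_subset_ball hρ1.le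
  have hg' : ContinuousOn (deriv g) (ball 0 1) := (hg.deriv isOpen_ball).continuousOn
  obtain ⟨C, hC⟩ := (isCompact_closedBall (0 : ℂ) ρ).exists_bound_of_continuousOn
    (hg'.mono (closedBall_subset_ball hρ1))
  obtain ⟨K, hK⟩ := (isCompact_uIcc (a := (0 : ℝ)) (b := 2 * Real.pi)).exists_bound_of_continuousOn
    hc.continuousOn
  have hcont : ∀ z ∈ ball (0 : ℂ) ρ, Continuous fun t => g (z * circleMap 0 1 t) * c t := by
    intro z hz
    refine Continuous.mul ?_ hc
    exact hg.continuousOn.comp_continuous (by fun_prop) fun t => hsub (hmem z hz t)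
  have hcont' : ∀ z ∈ ball (0 : ℂ) ρ,
      Continuous fun t => deriv g (z * circleMap 0 1 t) * circleMap 0 1 t * c t := by
    intro z hz
    refine Continuous.mul (Continuous.mul ?_ (by fun_prop)) hc
    exact hg'.comp_continuous (by fun_prop) fun t => hsub (hmem z hz t)
  have hz₀' : z₀ ∈ ball (0 : ℂ) ρ := by simpa using hzρ
  refine (intervalIntegral.hasDerivAt_integral_of_dominated_loc_of_deriv_le
    (bound := fun _ => C * K) (isOpen_ball.mem_nhds hz₀')
    (F' := fun z t => deriv g (z * circleMap 0 1 t) * circleMap 0 1 t * c t)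
    ?_ ?_ ?_ ?_ ?_ ?_).2.differentiableAt.differentiableWithinAt
  · filter_upwards [isOpen_ball.mem_nhds hz₀'] with z hz
    exact (hcont z hz).aestronglyMeasurable
  · exact (hcont z₀ hz₀').intervalIntegrable _ _
  · exact (hcont' z₀ hz₀').aestronglyMeasurable
  · refine .of_forall fun t ht z hz => ?_
    have h1 := hC _ (ball_subset_closedBall (hmem z hz t))
    have h2 := hK t (Set.uIoc_subset_uIcc ht)
    rw [norm_mul, norm_mul, norm_circleMap_zero, abs_one, mul_one]
    exact mul_le_mul h1 h2 (norm_nonneg _) ((norm_nonneg _).trans h1)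
  · simp
  · refine .of_forall fun t ht z hz => ?_
    have h1 : HasDerivAt g (deriv g (z * circleMap 0 1 t)) (z * circleMap 0 1 t) :=
      (hg.differentiableAt (isOpen_ball.mem_nhds (hsub (hmem z hz t)))).hasDerivAt
    exact (HasDerivAt.comp z h1 (by simpa using (hasDerivAt_id z).mul_const _)).mul_const _

theorem continuousOn_closedBall_integral_circleMap_mul {g : ℂ → ℂ}
    (hg : ContinuousOn g (closedBall 0 1)) {c : ℝ → ℂ} (hc : Continuous c) :
    ContinuousOn (fun z => ∫ t in (0 : ℝ)..(2 * Real.pi), g (z * circleMap 0 1 t) * c t)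
      (closedBall 0 1) := by
  rw [continuousOn_iff_continuous_domRestrict]
  refine intervalIntegral.continuous_parametric_intervalIntegral_of_continuous'
    (f := fun (z : closedBall (0 : ℂ) 1) t => g (z * circleMap 0 1 t) * c t) ?_ _ _
  refine Continuous.mul ?_ (by fun_prop)
  refine hg.comp_continuous (by fun_prop) fun p => ?_
  simpa [circleMap] using mem_closedBall_zero_iff.1 p.1.2

theorem continuous_comp_circleMap {E : Type*} [TopologicalSpace E] {f : ℂ → E}
    (hf : ContinuousOn f (closedBall 0 1)) {r : ℝ} (h0 : 0 ≤ r) (h1 : r ≤ 1) :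
    Continuous fun t => f (circleMap 0 r t) :=
  hf.comp_continuous (by fun_prop) fun t =>
    closedBall_subset_closedBall h1 (circleMap_mem_closedBall 0 h0 t)

/-- The mean squares of a holomorphic function on circles are largest on the boundary circle. -/
theorem integral_sq_norm_circleMap_le {g : ℂ → ℂ} (hg : DiffContOnCl ℂ g (ball 0 1)) {r : ℝ}
    (h0 : 0 ≤ r) (h1 : r ≤ 1) :
    ∫ t in (0 : ℝ)..(2 * Real.pi), ‖g (circleMap 0 r t)‖ ^ 2 ≤
      ∫ t in (0 : ℝ)..(2 * Real.pi), ‖g (circleMap 0 1 t)‖ ^ 2 := by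
  have hgc : ContinuousOn g (closedBall 0 1) := hg.continuousOn_ball
  have hcont : ∀ {s : ℝ}, 0 ≤ s → s ≤ 1 → Continuous fun t => g (circleMap 0 s t) :=
    fun h h' => continuous_comp_circleMap hgc h h'
  set c : ℝ → ℂ := fun t => (starRingEnd ℂ) (g (circleMap 0 r t)) with hc
  have hcc : Continuous c := Complex.continuous_conj.comp (hcont h0 h1)
  set h : ℂ → ℂ := fun z => ∫ t in (0 : ℝ)..(2 * Real.pi), g (z * circleMap 0 1 t) * c t with hh
  have hd : DiffContOnCl ℂ h (ball 0 1) :=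
    ⟨differentiableOn_ball_integral_circleMap_mul hg.differentiableOn hcc, by
      rw [closure_ball _ one_ne_zero]
      exact continuousOn_closedBall_integral_circleMap_mul hgc hcc⟩
  have hmul : ∀ t, (r : ℂ) * circleMap 0 1 t = circleMap 0 r t := by simp [circleMap]
  have hr : h r = ((∫ t in (0 : ℝ)..(2 * Real.pi), ‖g (circleMap 0 r t)‖ ^ 2 : ℝ) : ℂ) := by
    rw [← intervalIntegral.integral_ofReal]
    refine intervalIntegral.integral_congr fun t _ => ?_
    simp only [hmul, hc, Complex.mul_conj, Complex.normSq_eq_norm_sq]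
  have hbound : ∀ z ∈ frontier (ball (0 : ℂ) 1), ‖h z‖ ≤
      ((∫ t in (0 : ℝ)..(2 * Real.pi), ‖g (circleMap 0 1 t)‖ ^ 2) +
        ∫ t in (0 : ℝ)..(2 * Real.pi), ‖g (circleMap 0 r t)‖ ^ 2) / 2 := by
    intro z hz
    rw [frontier_ball _ one_ne_zero, mem_sphere_zero_iff_norm] at hz
    obtain ⟨s, rfl⟩ := Complex.norm_eq_one_iff z |>.1 hz
    have hmul' : ∀ t, Complex.exp (s * Complex.I) * circleMap 0 1 t = circleMap 0 1 (t + s) := by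
      intro t
      simp [circleMap, ← Complex.exp_add, add_mul, add_comm]
    have hper : Function.Periodic (fun t => ‖g (circleMap 0 1 t)‖ ^ 2) (2 * Real.pi) :=
      (periodic_circleMap 0 1).comp fun w => ‖g w‖ ^ 2
    have hshift : ∫ t in (0 : ℝ)..(2 * Real.pi), ‖g (circleMap 0 1 (t + s))‖ ^ 2 =
        ∫ t in (0 : ℝ)..(2 * Real.pi), ‖g (circleMap 0 1 t)‖ ^ 2 := by
      rw [intervalIntegral.integral_comp_add_right (fun t => ‖g (circleMap 0 1 t)‖ ^ 2),
        zero_add, add_comm]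
      simpa using hper.intervalIntegral_add_eq s 0
    have hc1 : Continuous fun t => g (circleMap 0 1 (t + s)) :=
      (hcont zero_le_one le_rfl).comp (by fun_prop)
    have hs1 : Continuous fun t => ‖g (circleMap 0 1 (t + s))‖ ^ 2 := hc1.norm.pow 2
    have hsr : Continuous fun t => ‖g (circleMap 0 r t)‖ ^ 2 := (hcont h0 h1).norm.pow 2
    rw [← hshift, ← intervalIntegral.integral_add (hs1.intervalIntegrable _ _)
      (hsr.intervalIntegrable _ _), ← intervalIntegral.integral_div]
    refine (intervalIntegral.norm_integral_le_integral_norm Real.two_pi_pos.le).trans ?_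
    refine intervalIntegral.integral_mono_on Real.two_pi_pos.le
      (Continuous.intervalIntegrable ?_ _ _)
      (((hs1.add hsr).div_const 2).intervalIntegrable _ _) ?_
    · simp only [hmul']
      exact (hc1.mul hcc).norm
    · intro t _
      simp only [hmul', hc, norm_mul, RCLike.norm_conj]
      nlinarith [sq_nonneg (‖g (circleMap 0 1 (t + s))‖ - ‖g (circleMap 0 r t)‖)]
  have hfin := Complex.norm_le_of_forall_mem_frontier_norm_le isBounded_ball hd hbound
    (z := (r : ℂ)) (by rw [closure_ball _ one_ne_zero]; simpa [abs_of_nonneg h0] using h1)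
  rw [hr, Complex.norm_real] at hfin
  linarith [le_abs_self (∫ t in (0 : ℝ)..(2 * Real.pi), ‖g (circleMap 0 r t)‖ ^ 2),
    Real.norm_eq_abs (∫ t in (0 : ℝ)..(2 * Real.pi), ‖g (circleMap 0 r t)‖ ^ 2)]

/-- Integration over the unit disk in polar coordinates. -/
theorem setIntegral_ball_eq_integral_circleMap {f : ℂ → ℝ} (hf : ContinuousOn f (closedBall 0 1)) :
    ∫ z in ball (0 : ℂ) 1, f z =
      ∫ r in Set.Ioo (0 : ℝ) 1, r * ∫ t in (0 : ℝ)..(2 * Real.pi), f (circleMap 0 r t) := by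
  have hind : ∀ p ∈ polarCoord.target,
      p.1 • (ball (0 : ℂ) 1).indicator f (Complex.polarCoord.symm p) =
        (Set.Ioo (0 : ℝ) 1 ×ˢ Set.Ioo (-Real.pi) Real.pi).indicator
          (fun p => p.1 * f (circleMap 0 p.1 p.2)) p := by
    rintro ⟨r, t⟩ ⟨hr, ht⟩
    have hr' : (0 : ℝ) < r := hr
    have hs : Complex.polarCoord.symm (r, t) = circleMap 0 r t := by
      simp [circleMap, Complex.exp_mul_I]
    have hm : circleMap 0 r t ∈ ball (0 : ℂ) 1 ↔ r < 1 := by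
      simp [abs_of_pos hr']
    rw [hs]
    by_cases h : r < 1
    · have h' : (r, t) ∈ Set.Ioo (0 : ℝ) 1 ×ˢ Set.Ioo (-Real.pi) Real.pi := ⟨⟨hr', h⟩, ht⟩
      rw [Set.indicator_of_mem (hm.2 h), Set.indicator_of_mem h', smul_eq_mul]
    · have h' : (r, t) ∉ Set.Ioo (0 : ℝ) 1 ×ˢ Set.Ioo (-Real.pi) Real.pi := fun h' => h h'.1.2
      rw [Set.indicator_of_notMem (mt hm.1 h), Set.indicator_of_notMem h', smul_zero]
  have hmeas : MeasurableSet (Set.Ioo (0 : ℝ) 1 ×ˢ Set.Ioo (-Real.pi) Real.pi) :=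
    measurableSet_Ioo.prod measurableSet_Ioo
  have hsub : Set.Ioo (0 : ℝ) 1 ×ˢ Set.Ioo (-Real.pi) Real.pi ⊆ polarCoord.target :=
    Set.prod_mono (fun r hr => hr.1) subset_rfl
  have hint : IntegrableOn (fun p : ℝ × ℝ => p.1 * f (circleMap 0 p.1 p.2))
      (Set.Ioo (0 : ℝ) 1 ×ˢ Set.Ioo (-Real.pi) Real.pi) := by
    refine IntegrableOn.mono_set ?_
      (Set.prod_mono Set.Ioo_subset_Icc_self Set.Ioo_subset_Icc_self)
    refine ContinuousOn.integrableOn_compact (isCompact_Icc.prod isCompact_Icc) ?_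
    refine continuousOn_fst.mul (hf.comp ?_ ?_)
    · simp only [circleMap]; fun_prop
    · rintro ⟨r, t⟩ ⟨hr, -⟩
      exact closedBall_subset_closedBall hr.2 (circleMap_mem_closedBall 0 hr.1 t)
  rw [← integral_indicator measurableSet_ball, ← Complex.integral_comp_polarCoord_symm,
    setIntegral_congr_fun polarCoord.open_target.measurableSet hind, setIntegral_indicator hmeas,
    Set.inter_eq_right.2 hsub,
    Measure.volume_eq_prod, setIntegral_prod _ (by rwa [← Measure.volume_eq_prod])]
  refine setIntegral_congr_fun measurableSet_Ioo fun r _ => ?_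
  have hper : Function.Periodic (fun t => f (circleMap 0 r t)) (2 * Real.pi) :=
    (periodic_circleMap 0 r).comp f
  have := hper.intervalIntegral_add_eq (-Real.pi) 0
  rw [zero_add, show -Real.pi + 2 * Real.pi = Real.pi by ring] at this
  simp only [integral_const_mul]
  rw [← this, intervalIntegral.integral_of_le (by linarith [Real.pi_pos]),
    integral_Ioc_eq_integral_Ioo]

theorem integral_sq_norm_ball_le {g : ℂ → ℂ} (hg : DiffContOnCl ℂ g (ball 0 1)) :
    ∫ z in ball (0 : ℂ) 1, ‖g z‖ ^ 2 ≤
      (∫ t in (0 : ℝ)..(2 * Real.pi), ‖g (circleMap 0 1 t)‖ ^ 2) / 2 := by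
  set M := ∫ t in (0 : ℝ)..(2 * Real.pi), ‖g (circleMap 0 1 t)‖ ^ 2 with hM
  rw [setIntegral_ball_eq_integral_circleMap (f := fun z => ‖g z‖ ^ 2)
    (hg.continuousOn_ball.norm.pow 2)]
  have hr : ∫ r in Set.Ioo (0 : ℝ) 1, r * M = M / 2 := by
    rw [← integral_Ioc_eq_integral_Ioo, ← intervalIntegral.integral_of_le zero_le_one,
      intervalIntegral.integral_mul_const, integral_id]
    ring
  rw [← hr]
  refine integral_mono_of_nonneg ?_ ?_ ?_
  · filter_upwards [ae_restrict_mem measurableSet_Ioo] with r hr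
    exact mul_nonneg hr.1.le
      (intervalIntegral.integral_nonneg Real.two_pi_pos.le fun t _ => sq_nonneg _)
  · exact ((continuous_id.mul continuous_const).integrableOn_Icc).mono_set Set.Ioo_subset_Icc_self
  · filter_upwards [ae_restrict_mem measurableSet_Ioo] with r hr
    exact mul_le_mul_of_nonneg_left (integral_sq_norm_circleMap_le hg hr.1.le hr.2.le) hr.1.le

/-- Since `z ↦ (z * g z) ^ 2` vanishes at the origin, the real and imaginary parts of `z * g z`
have the same mean square on the unit circle. -/
theorem integral_sq_norm_circleMap_eq_two_mul {g : ℂ → ℂ} (hg : DiffContOnCl ℂ g (ball 0 1)) :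
    ∫ t in (0 : ℝ)..(2 * Real.pi), ‖g (circleMap 0 1 t)‖ ^ 2 =
      2 * ∫ t in (0 : ℝ)..(2 * Real.pi), (circleMap 0 1 t * g (circleMap 0 1 t)).im ^ 2 := by
  have hc : Continuous fun t => circleMap 0 1 t * g (circleMap 0 1 t) :=
    (continuous_circleMap 0 1).mul
      (continuous_comp_circleMap hg.continuousOn_ball zero_le_one le_rfl)
  have hc2 : Continuous fun t => (circleMap 0 1 t * g (circleMap 0 1 t)) ^ 2 := hc.pow 2
  have hd : DiffContOnCl ℂ (fun z => (z * g z) ^ 2) (ball 0 |1|) := by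
    rw [abs_one]
    exact ⟨(differentiableOn_id.mul hg.1).pow 2, (continuousOn_id.mul hg.2).pow 2⟩
  have h0 : ∫ t in (0 : ℝ)..(2 * Real.pi),
      (circleMap 0 1 t * g (circleMap 0 1 t)) ^ 2 = 0 := by
    have := hd.circleAverage
    rw [Real.circleAverage_def] at this
    simpa [Real.pi_ne_zero] using this
  have h0re := congrArg Complex.reCLM h0
  rw [← ContinuousLinearMap.intervalIntegral_comp_comm Complex.reCLM
    (hc2.intervalIntegrable _ _), map_zero] at h0re
  have hn : Continuous fun t => ‖g (circleMap 0 1 t)‖ ^ 2 :=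
    (continuous_comp_circleMap hg.continuousOn_ball zero_le_one le_rfl).norm.pow 2
  have hi : Continuous fun t => 2 * (circleMap 0 1 t * g (circleMap 0 1 t)).im ^ 2 :=
    continuous_const.mul ((Complex.continuous_im.comp hc).pow 2)
  rw [← intervalIntegral.integral_const_mul, ← sub_eq_zero, ← intervalIntegral.integral_sub
    (hn.intervalIntegrable _ _) (hi.intervalIntegrable _ _)]
  refine (intervalIntegral.integral_congr fun t _ => ?_).trans h0re
  have h1 : ‖g (circleMap 0 1 t)‖ = ‖circleMap 0 1 t * g (circleMap 0 1 t)‖ := by simp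
  simp only [h1, Complex.sq_norm, Complex.normSq_apply, Complex.reCLM_apply]
  simp only [sq, Complex.mul_re (circleMap 0 1 t * g (circleMap 0 1 t))]
  ring

theorem deriv_comp_circleMap_eq_fderiv {E : Type*} [NormedAddCommGroup E] [NormedSpace ℝ E]
    {w : ℂ → E} {t : ℝ} (hw : DifferentiableAt ℝ w (circleMap 0 1 t)) :
    deriv (fun t => w (circleMap 0 1 t)) t =
      fderiv ℝ w (circleMap 0 1 t) (circleMap 0 1 t * Complex.I) :=
  (hw.hasFDerivAt.comp_hasDerivAt t (hasDerivAt_circleMap 0 1 t)).deriv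

/-- The scalar case of the energy estimate, for functions on the complex plane. -/
theorem dirichlet_energy_le_of_harmonicAt {v : ℂ → ℝ} {U : Set ℂ} (hU : IsOpen U)
    (hball : closedBall 0 1 ⊆ U) (hv : ContDiffOn ℝ 1 v U)
    (hharm : ∀ z ∈ ball (0 : ℂ) 1, InnerProductSpace.HarmonicAt v z) :
    ∫ z in ball (0 : ℂ) 1, (fderiv ℝ v z 1 ^ 2 + fderiv ℝ v z Complex.I ^ 2) ≤
      ∫ t in (0 : ℝ)..(2 * Real.pi), deriv (fun t => v (circleMap 0 1 t)) t ^ 2 := by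
  set g : ℂ → ℂ := fun z => fderiv ℝ v z 1 - Complex.I * fderiv ℝ v z Complex.I with hgdef
  have hfd : ContinuousOn (fderiv ℝ v) (closedBall 0 1) :=
    (hv.continuousOn_fderiv_of_isOpen hU le_rfl).mono hball
  have hg : DiffContOnCl ℂ g (ball 0 1) := by
    refine ⟨fun z hz =>
      (HarmonicAt.differentiableAt_complex_partial (hharm z hz)).differentiableWithinAt, ?_⟩
    rw [closure_ball _ one_ne_zero]
    fun_prop
  have hnorm : ∀ z, fderiv ℝ v z 1 ^ 2 + fderiv ℝ v z Complex.I ^ 2 = ‖g z‖ ^ 2 := by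
    intro z
    rw [← Complex.normSq_eq_norm_sq, Complex.normSq_apply]
    simp [hgdef, sq]
  have htan : ∀ t, deriv (fun t => v (circleMap 0 1 t)) t ^ 2 =
      (circleMap 0 1 t * g (circleMap 0 1 t)).im ^ 2 := by
    intro t
    have hmem : circleMap 0 1 t ∈ U := hball (circleMap_mem_closedBall 0 zero_le_one t)
    rw [deriv_comp_circleMap_eq_fderiv
      ((hv.differentiableOn one_ne_zero).differentiableAt (hU.mem_nhds hmem))]
    set z := circleMap 0 1 t
    have hz : z * Complex.I = (-z.im) • (1 : ℂ) + z.re • Complex.I := by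
      apply Complex.ext <;> simp
    rw [hz, map_add, map_smul, map_smul]
    simp only [hgdef, Complex.mul_im, Complex.sub_re, Complex.sub_im, Complex.mul_re,
      Complex.ofReal_re, Complex.ofReal_im, Complex.I_re, Complex.I_im, smul_eq_mul]
    ring
  simp only [hnorm, htan]
  linarith [integral_sq_norm_ball_le hg, integral_sq_norm_circleMap_eq_two_mul hg]

/-- The energy estimate for vector-valued functions on the complex plane. -/
theorem dirichlet_energy_le_of_forall_harmonicAt {ι : Type*} [Fintype ι]
    {w : ℂ → EuclideanSpace ℝ ι} {U : Set ℂ} (hU : IsOpen U)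
    (hball : closedBall 0 1 ⊆ U) (hw : ContDiffOn ℝ 1 w U)
    (hharm : ∀ j, ∀ z ∈ ball (0 : ℂ) 1, InnerProductSpace.HarmonicAt (fun z => w z j) z) :
    ∫ z in ball (0 : ℂ) 1, (‖fderiv ℝ w z 1‖ ^ 2 + ‖fderiv ℝ w z Complex.I‖ ^ 2) ≤
      ∫ t in (0 : ℝ)..(2 * Real.pi), ‖deriv (fun t => w (circleMap 0 1 t)) t‖ ^ 2 := by
  have hwd : ∀ z ∈ closedBall (0 : ℂ) 1, DifferentiableAt ℝ w z := fun z hz =>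
    (hw.differentiableOn one_ne_zero).differentiableAt (hU.mem_nhds (hball hz))
  have hcomp : ∀ j, ContDiffOn ℝ 1 (fun z => w z j) U := fun j =>
    (EuclideanSpace.proj (𝕜 := ℝ) j).contDiff.comp_contDiffOn hw
  have hfd : ∀ j, ContinuousOn (fderiv ℝ fun z => w z j) (closedBall 0 1) := fun j =>
    ((hcomp j).continuousOn_fderiv_of_isOpen hU le_rfl).mono hball
  have hcoord : ∀ j, ∀ z ∈ closedBall (0 : ℂ) 1, ∀ h : ℂ,
      fderiv ℝ (fun z => w z j) z h = fderiv ℝ w z h j := by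
    intro j z hz h
    have := ((EuclideanSpace.proj (𝕜 := ℝ) j).hasFDerivAt.comp z (hwd z hz).hasFDerivAt).fderiv
    exact congrArg (fun A => A h) this
  have hmem : ∀ t, circleMap 0 1 t ∈ closedBall (0 : ℂ) 1 :=
    circleMap_mem_closedBall 0 zero_le_one
  have hder : ∀ j t, deriv (fun t => w (circleMap 0 1 t) j) t =
      fderiv ℝ (fun z => w z j) (circleMap 0 1 t) (circleMap 0 1 t * Complex.I) := fun j t =>
    deriv_comp_circleMap_eq_fderiv (w := fun z => w z j)
      (((hcomp j).differentiableOn one_ne_zero).differentiableAt (hU.mem_nhds (hball (hmem t))))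
  have hlhs : ∫ z in ball (0 : ℂ) 1, (‖fderiv ℝ w z 1‖ ^ 2 + ‖fderiv ℝ w z Complex.I‖ ^ 2) =
      ∑ j, ∫ z in ball (0 : ℂ) 1, (fderiv ℝ (fun z => w z j) z 1 ^ 2 +
        fderiv ℝ (fun z => w z j) z Complex.I ^ 2) := by
    rw [← integral_finsetSum]
    · refine setIntegral_congr_fun measurableSet_ball fun z hz => ?_
      simp only [EuclideanSpace.norm_sq_eq, Real.norm_eq_abs, sq_abs, ← Finset.sum_add_distrib,
        hcoord _ z (ball_subset_closedBall hz)]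
    · intro j _
      have := hfd j
      refine IntegrableOn.mono_set ?_ (ball_subset_closedBall (x := (0 : ℂ)) (ε := 1))
      exact ContinuousOn.integrableOn_compact (isCompact_closedBall 0 1) (by fun_prop)
  have hrhs : ∫ t in (0 : ℝ)..(2 * Real.pi), ‖deriv (fun t => w (circleMap 0 1 t)) t‖ ^ 2 =
      ∑ j, ∫ t in (0 : ℝ)..(2 * Real.pi), deriv (fun t => w (circleMap 0 1 t) j) t ^ 2 := by
    rw [← intervalIntegral.integral_finsetSum]
    · refine intervalIntegral.integral_congr fun t _ => ?_
      simp only [EuclideanSpace.norm_sq_eq, Real.norm_eq_abs, sq_abs, hder,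
        deriv_comp_circleMap_eq_fderiv (hwd _ (hmem t)), hcoord _ _ (hmem t)]
    · intro j _
      refine Continuous.intervalIntegrable ?_ _ _
      simp only [hder]
      exact ((continuous_comp_circleMap (hfd j) zero_le_one le_rfl).clm_apply (by fun_prop)).pow 2
  rw [hlhs, hrhs]
  exact Finset.sum_le_sum fun j _ =>
    dirichlet_energy_le_of_harmonicAt hU hball (hcomp j) (hharm j)

theorem harmonicAt_comp_orthonormalBasisOneI_repr {u : EuclideanSpace ℝ (Fin 2) → ℝ}
    (hu : ContDiffOn ℝ 2 u (ball 0 1))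
    (hΔ : ∀ x ∈ ball (0 : EuclideanSpace ℝ (Fin 2)) 1,
      ∑ i : Fin 2, fderiv ℝ (fun y => fderiv ℝ u y (EuclideanSpace.single i (1 : ℝ))) x
        (EuclideanSpace.single i (1 : ℝ)) = 0) {z : ℂ} (hz : z ∈ ball (0 : ℂ) 1) :
    InnerProductSpace.HarmonicAt (fun z => u (Complex.orthonormalBasisOneI.repr z)) z := by
  set L := Complex.orthonormalBasisOneI.repr with hL
  have hLmem : ∀ z ∈ ball (0 : ℂ) 1, L z ∈ ball (0 : EuclideanSpace ℝ (Fin 2)) 1 := by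
    intro z hz
    simpa using hz
  have hcd : ∀ z ∈ ball (0 : ℂ) 1, ContDiffAt ℝ 2 u (L z) := fun z hz =>
    hu.contDiffAt (isOpen_ball.mem_nhds (hLmem z hz))
  refine ⟨(hcd z hz).comp z L.contDiff.contDiffAt, ?_⟩
  filter_upwards [isOpen_ball.mem_nhds hz] with y hy
  have hsecond : ∀ i, iteratedFDeriv ℝ 2 (fun z => u (L z)) y
      (fun _ => Complex.orthonormalBasisOneI i) =
      fderiv ℝ (fun y => fderiv ℝ u y (EuclideanSpace.single i (1 : ℝ))) (L y)
        (EuclideanSpace.single i (1 : ℝ)) := by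
    intro i
    have h := L.toContinuousLinearEquiv.iteratedFDerivWithin_comp_right u uniqueDiffOn_univ
      (Set.mem_univ (L y)) 2
    rw [Set.preimage_univ, iteratedFDerivWithin_univ, iteratedFDerivWithin_univ] at h
    have hd : DifferentiableAt ℝ (fderiv ℝ u) (L y) :=
      ((hcd y hy).fderiv_right (m := 1) (by norm_num)).differentiableAt one_ne_zero
    have h' := congrArg (fun A => A fun _ => Complex.orthonormalBasisOneI i) h
    refine h'.trans ?_
    rw [ContinuousMultilinearMap.compContinuousLinearMap_apply, iteratedFDeriv_two_apply,
      fderiv_clm_apply hd (differentiableAt_const _)]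
    simp [hL, -Complex.coe_orthonormalBasisOneI]
  rw [InnerProductSpace.laplacian_eq_iteratedFDeriv_orthonormalBasis _
    Complex.orthonormalBasisOneI, Pi.zero_apply, ← hΔ (L y) (hLmem y hy)]
  refine Finset.sum_congr rfl fun i _ => ?_
  rw [← hsecond]
  congr 1
  ext k
  fin_cases k <;> rfl

/-- The Dirichlet energy of a harmonic function on the unit disk is controlled by the
tangential energy of its boundary value. -/
theorem harmonic_dirichlet_boundary_bound (q : ℕ) (hq : 1 ≤ q)
    (ζ : EuclideanSpace ℝ (Fin 2) → EuclideanSpace ℝ (Fin q))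
    (hC1 : ∃ U : Set (EuclideanSpace ℝ (Fin 2)),
        IsOpen U ∧ closedBall (0 : EuclideanSpace ℝ (Fin 2)) 1 ⊆ U ∧ ContDiffOn ℝ 1 ζ U)
    (hC2 : ∀ j : Fin q, ContDiffOn ℝ 2 (fun x => ζ x j) (ball (0 : EuclideanSpace ℝ (Fin 2)) 1))
    (hharm : ∀ j : Fin q, ∀ x ∈ ball (0 : EuclideanSpace ℝ (Fin 2)) 1,
      ∑ i : Fin 2,
        fderiv ℝ (fun y => fderiv ℝ (fun z => ζ z j) y (EuclideanSpace.single i (1 : ℝ))) x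
          (EuclideanSpace.single i (1 : ℝ)) = 0) :
    ∫ x in ball (0 : EuclideanSpace ℝ (Fin 2)) 1,
        (∑ i : Fin 2, ‖fderiv ℝ ζ x (EuclideanSpace.single i (1 : ℝ))‖ ^ 2) ∂volume ≤
      ∫ θ in (0 : ℝ)..(2 * Real.pi),
        ‖deriv (fun t : ℝ =>
            ζ ((EuclideanSpace.equiv (Fin 2) ℝ).symm ![Real.cos t, Real.sin t])) θ‖ ^ 2 := by
  obtain ⟨U, hU, hball, hζ⟩ := hC1
  set L := Complex.orthonormalBasisOneI.repr with hL
  have hcurve : ∀ t : ℝ, (EuclideanSpace.equiv (Fin 2) ℝ).symm ![Real.cos t, Real.sin t] =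
      L (circleMap 0 1 t) := by
    intro t
    ext i
    fin_cases i <;> simp [hL, circleMap, Complex.exp_ofReal_mul_I_re, Complex.exp_ofReal_mul_I_im]
  have hpre : L ⁻¹' ball 0 1 = ball (0 : ℂ) 1 := by simp
  have hfderiv : ∀ z h, fderiv ℝ (fun z => ζ (L z)) z h = fderiv ℝ ζ (L z) (L h) := fun z h =>
    congrArg (fun A => A h) (L.toContinuousLinearEquiv.comp_right_fderiv (f := ζ) (x := z))
  have h0 : L 1 = EuclideanSpace.single 0 1 := by
    ext i
    fin_cases i <;> simp [hL]
  have h1 : L Complex.I = EuclideanSpace.single 1 1 := by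
    ext i
    fin_cases i <;> simp [hL]
  have key := dirichlet_energy_le_of_forall_harmonicAt (w := fun z => ζ (L z))
    (hU.preimage L.continuous)
    (fun z hz => hball (by simpa using hz))
    (hζ.comp L.contDiff.contDiffOn (Set.mapsTo_preimage L U))
    (fun j z hz => harmonicAt_comp_orthonormalBasisOneI_repr (hC2 j) (hharm j) hz)
  rw [← L.measurePreserving.setIntegral_preimage_emb
    L.toHomeomorph.measurableEmbedding _ _, hpre]
  simpa only [hcurve, hfderiv, h0, h1, Fin.sum_univ_two] using key
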